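/- Let A be a left brace (a skew left brace whose additive group (A,+) is abelian). If A = B + C is a factorization through left ideals B and C, where both are trivial as skew left braces, then Soc(A) = Ker λ is a factorized ideal of A, i.e., Ker λ = (Ker λ ∩ B) + (Ker λ ∩ C). -/

import Mathlib

/-- A skew left brace: `(A,+)` and `(A,∘)` are groups (sharing the same identity `0`)
such that `a ∘ (b + c) = a ∘ b - a + a ∘ c`.  Here `circ` is the operation `∘` and
`cinv a` is the inverse of `a` in `(A,∘)`. -/
class SkewBrace (A : Type*) extends AddGroup A where
  circ : A → A → A
  cinv : A → A
  circ_assoc : ∀ a b c : A, circ (circ a b) c = circ a (circ b c)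
  zero_circ : ∀ a : A, circ 0 a = a
  circ_zero : ∀ a : A, circ a 0 = a
  cinv_circ : ∀ a : A, circ (cinv a) a = 0
  circ_cinv : ∀ a : A, circ a (cinv a) = 0
  compat : ∀ a b c : A, circ a (b + c) = circ a b + -a + circ a c

open SkewBrace

/-- `lam a b = -a + a ∘ b`. -/
def lam {A : Type*} [SkewBrace A] (a b : A) : A := -a + circ a b

/-- The star operation `a * b = lam a b - b = -a + a ∘ b - b`. -/
def bstar {A : Type*} [SkewBrace A] (a b : A) : A := lam a b - b

/-- `X * Y`: the subgroup of `(A,+)` generated by `{x * y : x ∈ X, y ∈ Y}`. -/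
def starSpan {A : Type*} [SkewBrace A] (X Y : Set A) : AddSubgroup A :=
  AddSubgroup.closure {z | ∃ x ∈ X, ∃ y ∈ Y, z = bstar x y}

/-- The right series of `st`: `rseriesOf st 0 = A = A^(1)` and
`rseriesOf st n = A^(n+1)`, so that `A^(n+1) = A^(n) * A`. -/
def rseriesOf {G : Type*} [AddGroup G] (st : G → G → G) : ℕ → AddSubgroup G
  | 0 => ⊤
  | n + 1 => AddSubgroup.closure {z | ∃ u ∈ rseriesOf st n, ∃ a : G, z = st u a}

/-!
Since `λ` is a homomorphism from `(A,∘)` to `Aut (A,+)`, a sum `b + c` can be rewritten as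
`b ∘ d` with `d = λ_{b⁻¹}(c)`, which again lies in the left ideal `C`. If `b + c ∈ Ker λ`, then
`λ_b` inverts `λ_d`; as `C` is trivial, `λ_d` fixes `C`, hence so does `λ_b`. As `B` is trivial,
`λ_b` fixes `B` as well, so it fixes `A = B + C`. Thus `b ∈ Ker λ`, and `c ∈ Ker λ` follows because
`Ker λ` is a subgroup of `(A,+)`.
-/

namespace SkewBrace

variable {A : Type*} [SkewBrace A]

theorem circ_eq_add_lam (a b : A) : circ a b = a + lam a b :=
  (add_neg_cancel_left a (circ a b)).symm

theorem add_eq_circ_iff {a b : A} : a + b = circ a b ↔ lam a b = b := by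
  rw [circ_eq_add_lam, add_right_inj, eq_comm]

theorem lam_zero_left (a : A) : lam 0 a = a := by
  rw [← add_eq_circ_iff, zero_add, zero_circ]

theorem lam_add (a b c : A) : lam a (b + c) = lam a b + lam a c := by
  simp only [lam, compat, add_assoc]

theorem lam_circ (a b c : A) : lam (circ a b) c = lam a (lam b c) := by
  apply add_left_cancel (a := circ a b)
  calc circ a b + lam (circ a b) c
      = circ a (circ b c) := by rw [← circ_eq_add_lam, circ_assoc]
    _ = a + (lam a b + lam a (lam b c)) := by
        rw [circ_eq_add_lam b c, circ_eq_add_lam a, lam_add]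
    _ = circ a b + lam a (lam b c) := by rw [← add_assoc, ← circ_eq_add_lam]

theorem lam_lam_cinv (a b : A) : lam a (lam (cinv a) b) = b := by
  rw [← lam_circ, circ_cinv, lam_zero_left]

theorem add_eq_circ_lam_cinv (a b : A) : a + b = circ a (lam (cinv a) b) := by
  rw [circ_eq_add_lam, lam_lam_cinv]

variable (A) in
/-- The kernel of `λ`, as a subgroup of the additive group; it is the socle when `(A,+)` is
abelian. -/
def lamKer : AddSubgroup A where
  carrier := {a | ∀ x, lam a x = x}
  zero_mem' := lam_zero_left
  add_mem' {a b} ha hb x := by rw [add_eq_circ_iff.mpr (ha b), lam_circ, hb, ha]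
  neg_mem' {a} ha x := by
    have circ_neg : circ a (-a) = 0 := by rw [← add_eq_circ_iff.mpr (ha (-a)), add_neg_cancel]
    rw [← ha (lam (-a) x), ← lam_circ, circ_neg, lam_zero_left]

theorem left_mem_lamKer_of_circ_mem {B C : Set A}
    (hBtriv : ∀ x ∈ B, ∀ y ∈ B, x + y = circ x y)
    (hCtriv : ∀ x ∈ C, ∀ y ∈ C, x + y = circ x y)
    (hfact : ∀ a : A, ∃ b ∈ B, ∃ c ∈ C, a = b + c)
    {b d : A} (hb : b ∈ B) (hd : d ∈ C) (hbd : circ b d ∈ lamKer A) : b ∈ lamKer A := by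
  have lam_fixes_B : ∀ y ∈ B, lam b y = y := fun y hy ↦ add_eq_circ_iff.mp (hBtriv b hb y hy)
  have lam_fixes_C : ∀ z ∈ C, lam b z = z := fun z hz ↦
    calc lam b z = lam b (lam d z) := by rw [add_eq_circ_iff.mp (hCtriv d hd z hz)]
      _ = lam (circ b d) z := (lam_circ b d z).symm
      _ = z := hbd z
  intro x
  obtain ⟨y, hy, z, hz, rfl⟩ := hfact x
  rw [lam_add, lam_fixes_B y hy, lam_fixes_C z hz]

end SkewBrace

open scoped Pointwise in
theorem stmt14_general {A : Type*} [SkewBrace A] {B C : Set A}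
    (hC : ∀ a : A, ∀ x ∈ C, lam a x ∈ C)
    (hBtriv : ∀ x ∈ B, ∀ y ∈ B, x + y = circ x y)
    (hCtriv : ∀ x ∈ C, ∀ y ∈ C, x + y = circ x y)
    (hfact : ∀ a : A, ∃ b ∈ B, ∃ c ∈ C, a = b + c) :
    (lamKer A : Set A) = (↑(lamKer A) ∩ B) + (↑(lamKer A) ∩ C) := by
  apply Set.Subset.antisymm
  · intro a ha
    obtain ⟨b, hb, c, hc, rfl⟩ := hfact a
    have hbd : circ b (lam (cinv b) c) ∈ lamKer A := by rwa [← add_eq_circ_lam_cinv]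
    have hbKer : b ∈ lamKer A :=
      left_mem_lamKer_of_circ_mem hBtriv hCtriv hfact hb (hC (cinv b) c hc) hbd
    have hcKer : c ∈ lamKer A := ((lamKer A).add_mem_cancel_left hbKer).mp ha
    exact Set.add_mem_add ⟨hbKer, hb⟩ ⟨hcKer, hc⟩
  · rintro _ ⟨u, ⟨hu, -⟩, v, ⟨hv, -⟩, rfl⟩
    exact add_mem hu hv

/-- if `A` is a left brace (additive group abelian) and `A = B + C` through
left ideals trivial as skew braces, then `Soc(A) = Ker lam` is factorized:
`Ker lam = (Ker lam ∩ B) + (Ker lam ∩ C)`. -/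
theorem stmt14 {A : Type*} [SkewBrace A]
    (hcomm : ∀ a b : A, a + b = b + a)
    (B C : AddSubgroup A)
    (hB : ∀ a : A, ∀ x ∈ B, lam a x ∈ B)
    (hC : ∀ a : A, ∀ x ∈ C, lam a x ∈ C)
    (hBtriv : ∀ x ∈ B, ∀ y ∈ B, x + y = circ x y)
    (hCtriv : ∀ x ∈ C, ∀ y ∈ C, x + y = circ x y)
    (hfact : ∀ a : A, ∃ b ∈ B, ∃ c ∈ C, a = b + c) :
    {a : A | ∀ x : A, lam a x = x} =
      {t : A | ∃ u ∈ {a : A | ∀ x : A, lam a x = x} ∩ (B : Set A),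
               ∃ v ∈ {a : A | ∀ x : A, lam a x = x} ∩ (C : Set A), t = u + v} := by
  refine (stmt14_general hC hBtriv hCtriv hfact).trans (Set.ext fun t ↦ ?_)
  simp only [Set.mem_add, eq_comm (b := t)]; rfl
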